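/- arXiv:2406.10608 — 2 statements merged into one kernel-verified Lean document; each statement's English description precedes it below -/
import Mathlib

section
/- (Greedy is a 1/k-approximation.) Let (I, vtx, w) be a weighted k-instance family on a finite vertex set V with |V| = n ≥ k. Consider any greedy peeling chain W_n = V ⊋ W_{n−1} ⊋ ⋯ ⊋ W_k where, for each j from n down to k+1, W_{j−1} = W_j ∖ {v_j} for some v_j ∈ W_j satisfying deg_{W_j}(v_j) ≤ deg_{W_j}(u) for all u ∈ W_j. Then for every optimal W* there exists an index j with k ≤ j ≤ n such that ρ(W_j) ≥ (1/k) · ρ(W*). -/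
/-!
Write `ρ* = ρ(W*)`. Optimality of `W*` forces every vertex `u ∈ W*` to have degree at least `ρ*`
inside `W*`: deleting `u` costs exactly `deg_{W*}(u)` in weight (`tauW_eq_erase_add_degW`), while
the remaining weight is at most `ρ* (|W*| - 1)` (`OptimalTMDS.le_degW`).

Consider the moment the peeling chain first removes a vertex `v_j` of `W*`. Then `W* ⊆ W_j`, so the
minimum degree in `W_j` is `deg_{W_j}(v_j) ≥ deg_{W*}(v_j) ≥ ρ*`. Since each instance is counted
once at each of its `k` vertices, the degrees in `W_j` sum to `k τ(W_j)` (`sum_degW`), whence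
`k τ(W_j) ≥ |W_j| ρ*`. If no vertex of `W*` is ever removed, then `W* ⊆ W_k`, and
`ρ* ≤ τ(W*) ≤ τ(W_k) = k ρ(W_k)` because `|W_k| = k`.
-/

open Finset MeasureTheory

open scoped Classical

variable {α ι : Type*} [DecidableEq α]

noncomputable def tauW (I : Finset ι) (vtx : ι → Finset α) (w : ι → ℝ) (W : Finset α) : ℝ :=
  ∑ i ∈ I.filter (fun i => vtx i ⊆ W), w i

noncomputable def degW (I : Finset ι) (vtx : ι → Finset α) (w : ι → ℝ) (W : Finset α)
    (v : α) : ℝ :=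
  ∑ i ∈ I.filter (fun i => vtx i ⊆ W ∧ v ∈ vtx i), w i

noncomputable def rhoW (I : Finset ι) (vtx : ι → Finset α) (w : ι → ℝ) (W : Finset α) : ℝ :=
  tauW I vtx w W / (W.card : ℝ)

def OptimalTMDS (I : Finset ι) (vtx : ι → Finset α) (w : ι → ℝ) (V Wstar : Finset α) : Prop :=
  Wstar ⊆ V ∧ Wstar.Nonempty ∧
    ∀ W ⊆ V, W.Nonempty → rhoW I vtx w W ≤ rhoW I vtx w Wstar

noncomputable def batchL (k : ℕ) (ξ : ℝ) (I : Finset ι) (vtx : ι → Finset α) (w : ι → ℝ)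
    (W : Finset α) : Finset α :=
  W.filter (fun v => degW I vtx w W v ≤ (k : ℝ) * (1 + ξ) * tauW I vtx w W / (W.card : ℝ))

theorem tauW_eq_erase_add_degW (I : Finset ι) (vtx : ι → Finset α) (w : ι → ℝ) (W : Finset α)
    (u : α) : tauW I vtx w W = tauW I vtx w (W.erase u) + degW I vtx w W u := by
  unfold tauW degW
  simp only [Finset.sum_filter]
  rw [← Finset.sum_add_distrib]
  refine Finset.sum_congr rfl fun i _ => ?_
  by_cases h : vtx i ⊆ W <;> by_cases h' : u ∈ vtx i <;> simp [Finset.subset_erase, h, h']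

theorem tauW_mono {I : Finset ι} {vtx : ι → Finset α} {w : ι → ℝ} (hw : ∀ i ∈ I, 0 ≤ w i)
    {A B : Finset α} (h : A ⊆ B) : tauW I vtx w A ≤ tauW I vtx w B := by
  refine Finset.sum_le_sum_of_subset_of_nonneg (fun i hi => ?_) fun i hi _ =>
    hw i (Finset.mem_filter.1 hi).1
  rw [Finset.mem_filter] at hi ⊢
  exact ⟨hi.1, hi.2.trans h⟩

theorem degW_mono {I : Finset ι} {vtx : ι → Finset α} {w : ι → ℝ} (hw : ∀ i ∈ I, 0 ≤ w i)
    {A B : Finset α} (h : A ⊆ B) (v : α) : degW I vtx w A v ≤ degW I vtx w B v := by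
  refine Finset.sum_le_sum_of_subset_of_nonneg (fun i hi => ?_) fun i hi _ =>
    hw i (Finset.mem_filter.1 hi).1
  rw [Finset.mem_filter] at hi ⊢
  exact ⟨hi.1, hi.2.1.trans h, hi.2.2⟩

theorem tauW_nonneg {I : Finset ι} {vtx : ι → Finset α} {w : ι → ℝ} (hw : ∀ i ∈ I, 0 ≤ w i)
    (W : Finset α) : 0 ≤ tauW I vtx w W :=
  Finset.sum_nonneg fun i hi => hw i (Finset.mem_filter.1 hi).1

/-- Double counting: an instance inside `W` contributes its weight once at each of its `k`
vertices. -/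
theorem sum_degW {k : ℕ} {I : Finset ι} {vtx : ι → Finset α} {w : ι → ℝ}
    (hcard : ∀ i ∈ I, (vtx i).card = k) (W : Finset α) :
    ∑ v ∈ W, degW I vtx w W v = k * tauW I vtx w W := by
  unfold tauW degW
  simp only [Finset.sum_filter]
  rw [Finset.sum_comm, Finset.mul_sum]
  refine Finset.sum_congr rfl fun i hi => ?_
  by_cases h : vtx i ⊆ W
  · simp only [h, true_and, if_true]
    rw [← Finset.sum_filter, Finset.filter_mem_eq_inter, Finset.inter_eq_right.2 h,
      Finset.sum_const, hcard i hi, nsmul_eq_mul]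
  · simp [h]

/-- The bound `τ(W) ≤ ρ* |W|`; for `W = ∅` it holds because no instance has an empty vertex set. -/
theorem OptimalTMDS.tauW_le {k : ℕ} (hk : 2 ≤ k) {V Wstar : Finset α} {I : Finset ι}
    {vtx : ι → Finset α} {w : ι → ℝ} (hcard : ∀ i ∈ I, (vtx i).card = k)
    (hopt : OptimalTMDS I vtx w V Wstar) {W : Finset α} (hW : W ⊆ V) :
    tauW I vtx w W ≤ rhoW I vtx w Wstar * W.card := by
  rcases W.eq_empty_or_nonempty with rfl | hne
  · refine le_of_eq ?_
    simp only [Finset.card_empty, Nat.cast_zero, mul_zero]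
    refine Finset.sum_eq_zero fun i hi => ?_
    obtain ⟨hi, he⟩ := Finset.mem_filter.1 hi
    have := hcard i hi
    rw [Finset.subset_empty.1 he, Finset.card_empty] at this
    omega
  · exact (div_le_iff₀ (by exact_mod_cast hne.card_pos)).1 (hopt.2.2 W hW hne)

/-- Every vertex of an optimal set has degree at least the optimal density: deleting it
leaves weight at most `ρ* (|W*| - 1)` out of `τ(W*) = ρ* |W*|`. -/
theorem OptimalTMDS.le_degW {k : ℕ} (hk : 2 ≤ k) {V Wstar : Finset α} {I : Finset ι}
    {vtx : ι → Finset α} {w : ι → ℝ} (hcard : ∀ i ∈ I, (vtx i).card = k)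
    (hopt : OptimalTMDS I vtx w V Wstar) {u : α} (hu : u ∈ Wstar) :
    rhoW I vtx w Wstar ≤ degW I vtx w Wstar u := by
  have h1 := hopt.tauW_le hk hcard ((Finset.erase_subset u Wstar).trans hopt.1)
  have h2 := tauW_eq_erase_add_degW I vtx w Wstar u
  have hpos : (0 : ℝ) < Wstar.card := by exact_mod_cast hopt.2.1.card_pos
  have h3 : tauW I vtx w Wstar = rhoW I vtx w Wstar * Wstar.card := by
    rw [rhoW, div_mul_cancel₀ _ hpos.ne']
  have h4 : ((Wstar.erase u).card : ℝ) = Wstar.card - 1 := by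
    rw [Finset.cast_card_erase_of_mem hu]
  rw [h4] at h1
  linarith

/-- Greedy peeling is a `1/k`-approximation: along any greedy peeling chain
`W_n = V ⊋ ⋯ ⊋ W_k` where at each step a minimum-degree vertex is removed, some `W_j`
(with `k ≤ j ≤ n`) satisfies `ρ(W_j) ≥ (1/k)·ρ(W*)` for every optimal `W*`. -/
theorem stmt4
    (k : ℕ) (hk : 2 ≤ k)
    (V : Finset α) (I : Finset ι) (vtx : ι → Finset α) (w : ι → ℝ)
    (hvtx : ∀ i ∈ I, vtx i ⊆ V) (hcard : ∀ i ∈ I, (vtx i).card = k)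
    (hw : ∀ i ∈ I, 0 ≤ w i)
    (n : ℕ) (hn : V.card = n) (hkn : k ≤ n)
    (Wc : ℕ → Finset α) (vs : ℕ → α)
    (hWn : Wc n = V)
    (hstep : ∀ j, k < j → j ≤ n →
      vs j ∈ Wc j ∧
        (∀ u ∈ Wc j, degW I vtx w (Wc j) (vs j) ≤ degW I vtx w (Wc j) u) ∧
        Wc (j - 1) = (Wc j).erase (vs j))
    (Wstar : Finset α) (hopt : OptimalTMDS I vtx w V Wstar) :
    ∃ j, k ≤ j ∧ j ≤ n ∧
      (1 / (k : ℝ)) * rhoW I vtx w Wstar ≤ rhoW I vtx w (Wc j) := by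
  have hk0 : (0 : ℝ) < k := by exact_mod_cast (by omega : 0 < k)
  -- Descend along the chain as long as it still contains `Wstar`.
  have key : ∀ j, k ≤ j → j ≤ n → (Wc j).card = j → Wstar ⊆ Wc j →
      ∃ j, k ≤ j ∧ j ≤ n ∧ (1 / (k : ℝ)) * rhoW I vtx w Wstar ≤ rhoW I vtx w (Wc j) := by
    intro j hj
    induction j, hj using Nat.le_induction with
    | base =>
      intro _ hc hsub
      refine ⟨k, le_rfl, hkn, ?_⟩
      have h1 : rhoW I vtx w Wstar ≤ tauW I vtx w Wstar :=
        div_le_self (tauW_nonneg hw _) (by exact_mod_cast hopt.2.1.card_pos)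
      have h2 := h1.trans (tauW_mono hw hsub)
      rw [rhoW.eq_def I vtx w (Wc k), hc, one_div_mul_eq_div]
      gcongr
    | succ j hj ih =>
      intro hjn hc hsub
      obtain ⟨hv, hmin, hnext⟩ := hstep (j + 1) (by omega) hjn
      rw [Nat.add_sub_cancel] at hnext
      by_cases hvs : vs (j + 1) ∈ Wstar
      · refine ⟨j + 1, by omega, hjn, ?_⟩
        have hdeg : ∀ u ∈ Wc (j + 1), rhoW I vtx w Wstar ≤ degW I vtx w (Wc (j + 1)) u :=
          fun u hu => ((hopt.le_degW hk hcard hvs).trans (degW_mono hw hsub _)).trans (hmin u hu)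
        have hsum := Finset.card_nsmul_le_sum _ _ _ hdeg
        rw [sum_degW hcard, nsmul_eq_mul] at hsum
        have hpos : (0 : ℝ) < (Wc (j + 1)).card := by
          exact_mod_cast Finset.card_pos.2 ⟨_, hv⟩
        rw [rhoW.eq_def I vtx w (Wc (j + 1)), one_div_mul_eq_div, div_le_div_iff₀ hk0 hpos]
        linarith
      · refine ih (by omega) ?_ ?_
        · rw [hnext, Finset.card_erase_of_mem hv, hc, Nat.add_sub_cancel]
        · rw [hnext]
          exact Finset.subset_erase.2 ⟨hsub, hvs⟩
  exact key n hkn le_rfl (by rw [hWn, hn]) (by rw [hWn]; exact hopt.1)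
end

section
/- (Deterministic core of Theorem 4.1: ProbPeel with accurate estimates achieves a (1−ε)²/(k(1+ξ)(1+ε)²)-approximation.) Let (I, vtx, w) be a weighted k-instance family on a nonempty finite vertex set V, let ε ∈ (0,1) and ξ > 0. Define W_1 = V, and for each i with W_i nonempty let f_i : W_i → ℝ be any function satisfying (1−ε)·deg_{W_i}(u) ≤ f_i(u) ≤ (1+ε)·deg_{W_i}(u) for all u ∈ W_i; set ĥ_i = (1/k)·∑_{u ∈ W_i} f_i(u) and W_{i+1} = W_i ∖ {u ∈ W_i : f_i(u) ≤ k(1+ξ)·ĥ_i/|W_i|}. Then the chain reaches the empty set, and if j is an index with W_j nonempty maximizing ĥ_j/|W_j| over all indices with nonempty W_j, then for every optimal W*, ρ(W_j) ≥ (1−ε)²/(k(1+ξ)(1+ε)²) · ρ(W*). -/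
/-!
Every vertex `v` of an optimal set `W*` satisfies `ρ(W*) ≤ deg_{W*}(v)`, since otherwise deleting
`v` would raise the density (`rho_le_deg_of_optimal`). Each step of the chain deletes a vertex,
because the threshold is at least the average estimate (`exists_le_threshold`), so the chain reaches
`∅` and there is a last `W_i ⊇ W*`. A vertex `v ∈ W*` deleted at step `i` gives

`(1-ε) ρ(W*) ≤ (1-ε) deg_{W_i}(v) ≤ f_i(v) ≤ k(1+ξ) ĥ_i/|W_i| ≤ k(1+ξ) ĥ_j/|W_j|
  ≤ k(1+ξ)(1+ε) ρ(W_j)`,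

where the last inequality is the double count `∑_{u ∈ W} deg_W(u) = k τ(W)` (`sum_deg`). This is
stronger than the claimed bound by a factor `(1+ε)/(1-ε) ≥ 1`.
-/

open Finset MeasureTheory

open scoped Classical

variable {α ι : Type*} [DecidableEq α]

lemma sum_deg (k : ℕ) (I : Finset ι) (vtx : ι → Finset α) (w : ι → ℝ)
    (hcard : ∀ i ∈ I, (vtx i).card = k) (W : Finset α) :
    ∑ u ∈ W, degW I vtx w W u = (k : ℝ) * tauW I vtx w W := by
  unfold degW tauW
  simp only [Finset.sum_filter]
  rw [Finset.sum_comm, Finset.mul_sum]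
  refine Finset.sum_congr rfl fun i hi => ?_
  by_cases h : vtx i ⊆ W
  · have hf : W.filter (fun u => u ∈ vtx i) = vtx i := by
      ext u
      simp only [Finset.mem_filter]
      exact ⟨fun hu => hu.2, fun hu => ⟨h hu, hu⟩⟩
    simp only [h, true_and, if_true]
    rw [← Finset.sum_filter, hf, Finset.sum_const, hcard i hi, nsmul_eq_mul]
  · simp [h]

lemma deg_nonneg (I : Finset ι) (vtx : ι → Finset α) (w : ι → ℝ)
    (hw : ∀ i ∈ I, 0 ≤ w i) (W : Finset α) (v : α) : 0 ≤ degW I vtx w W v :=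
  Finset.sum_nonneg fun i hi => hw i (Finset.mem_filter.1 hi).1

lemma rho_nonneg (I : Finset ι) (vtx : ι → Finset α) (w : ι → ℝ)
    (hw : ∀ i ∈ I, 0 ≤ w i) (W : Finset α) : 0 ≤ rhoW I vtx w W :=
  div_nonneg (Finset.sum_nonneg fun i hi => hw i (Finset.mem_filter.1 hi).1) (Nat.cast_nonneg _)

lemma deg_mono (I : Finset ι) (vtx : ι → Finset α) (w : ι → ℝ)
    (hw : ∀ i ∈ I, 0 ≤ w i) {W W' : Finset α} (h : W ⊆ W') (v : α) :
    degW I vtx w W v ≤ degW I vtx w W' v := by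
  unfold degW
  refine Finset.sum_le_sum_of_subset_of_nonneg ?_ fun i hi _ => hw i (Finset.mem_filter.1 hi).1
  intro i hi
  simp only [Finset.mem_filter] at hi ⊢
  exact ⟨hi.1, hi.2.1.trans h, hi.2.2⟩

lemma tau_eq_erase_add_deg (I : Finset ι) (vtx : ι → Finset α) (w : ι → ℝ) (W : Finset α) (v : α) :
    tauW I vtx w W = tauW I vtx w (W.erase v) + degW I vtx w W v := by
  unfold tauW degW
  simp only [Finset.sum_filter]
  rw [← Finset.sum_add_distrib]
  refine Finset.sum_congr rfl fun i _ => ?_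
  by_cases h : vtx i ⊆ W <;> by_cases hv : v ∈ vtx i <;> simp [h, hv, Finset.subset_erase]

/-- Deleting `v` from an optimal set cannot raise the density, so `v` carries at least the average
weight. When the set is `{v}` this uses that no instance fits inside `∅`. -/
lemma rho_le_deg_of_optimal (k : ℕ) (hk : 2 ≤ k) (V : Finset α) (I : Finset ι)
    (vtx : ι → Finset α) (w : ι → ℝ) (hcard : ∀ i ∈ I, (vtx i).card = k)
    (S : Finset α) (hS : OptimalTMDS I vtx w V S) (v : α) (hv : v ∈ S) :
    rhoW I vtx w S ≤ degW I vtx w S v := by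
  obtain ⟨hSV, hne, hmax⟩ := hS
  have hpos : (0 : ℝ) < S.card := by exact_mod_cast hne.card_pos
  have htau : tauW I vtx w S = rhoW I vtx w S * S.card := by
    unfold rhoW; field_simp
  have herase : tauW I vtx w (S.erase v) ≤ rhoW I vtx w S * (S.erase v).card := by
    rcases (S.erase v).eq_empty_or_nonempty with h | h
    · rw [h]
      refine le_of_eq ?_
      simp only [tauW, Finset.card_empty, Nat.cast_zero, mul_zero]
      refine Finset.sum_eq_zero fun i hi => ?_
      rw [Finset.mem_filter, Finset.subset_empty] at hi
      have := hcard i hi.1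
      rw [hi.2, Finset.card_empty] at this
      omega
    · have := hmax _ ((Finset.erase_subset v S).trans hSV) h
      have hp : (0 : ℝ) < (S.erase v).card := by exact_mod_cast h.card_pos
      exact (div_le_iff₀ hp).1 this
  have hc : ((S.erase v).card : ℝ) = S.card - 1 := by
    rw [← Finset.card_erase_add_one hv]; push_cast; ring
  have hdec := tau_eq_erase_add_deg I vtx w S v
  rw [hc] at herase
  linarith

lemma exists_le_threshold (W : Finset α) (hW : W.Nonempty) (g : α → ℝ) (hg : ∀ u ∈ W, 0 ≤ g u)
    (ξ : ℝ) (hξ : 0 < ξ) : ∃ u ∈ W, g u ≤ (1 + ξ) * (∑ x ∈ W, g x) / (W.card : ℝ) := by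
  have hpos : (0 : ℝ) < W.card := by exact_mod_cast hW.card_pos
  have hs := Finset.sum_nonneg hg
  by_contra! h
  have := Finset.sum_lt_sum_of_nonempty hW h
  rw [Finset.sum_const, nsmul_eq_mul, mul_div_cancel₀ _ hpos.ne'] at this
  nlinarith

/-- Deterministic core of Theorem 4.1 (ProbPeel): with `(1±ε)`-accurate
degree estimates `f_i` at every iteration, the batch-peeling chain reaches the empty set,
and any nonempty `W_j` maximizing the estimated density `ĥ_j/|W_j|` satisfies
`ρ(W_j) ≥ (1−ε)²/(k(1+ξ)(1+ε)²) · ρ(W*)` for every optimal `W*`. -/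
theorem stmt15
    (k : ℕ) (hk : 2 ≤ k)
    (V : Finset α) (I : Finset ι) (vtx : ι → Finset α) (w : ι → ℝ)
    (hvtx : ∀ i ∈ I, vtx i ⊆ V) (hcard : ∀ i ∈ I, (vtx i).card = k)
    (hw : ∀ i ∈ I, 0 ≤ w i)
    (hV : V.Nonempty)
    (ε ξ : ℝ) (hε : ε ∈ Set.Ioo (0 : ℝ) 1) (hξ : 0 < ξ)
    (Wc : ℕ → Finset α) (f : ℕ → α → ℝ)
    (hW1 : Wc 1 = V)
    (hacc : ∀ i, 1 ≤ i → ∀ u ∈ Wc i,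
      (1 - ε) * degW I vtx w (Wc i) u ≤ f i u ∧
        f i u ≤ (1 + ε) * degW I vtx w (Wc i) u)
    (hstep : ∀ i, 1 ≤ i → Wc (i + 1) = (Wc i).filter (fun u =>
      ¬ f i u ≤ (k : ℝ) * (1 + ξ) * ((1 / (k : ℝ)) * ∑ x ∈ Wc i, f i x) / ((Wc i).card : ℝ))) :
    (∃ i, 1 ≤ i ∧ Wc i = ∅) ∧
      ∀ j, 1 ≤ j → (Wc j).Nonempty →
        (∀ i, 1 ≤ i → (Wc i).Nonempty →
          ((1 / (k : ℝ)) * ∑ x ∈ Wc i, f i x) / ((Wc i).card : ℝ)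
            ≤ ((1 / (k : ℝ)) * ∑ x ∈ Wc j, f j x) / ((Wc j).card : ℝ)) →
        ∀ Wstar, OptimalTMDS I vtx w V Wstar →
          (1 - ε) ^ 2 / ((k : ℝ) * (1 + ξ) * (1 + ε) ^ 2) * rhoW I vtx w Wstar
            ≤ rhoW I vtx w (Wc j) := by
  obtain ⟨hε0, hε1⟩ := hε
  have hk0 : (0 : ℝ) < k := by exact_mod_cast (by omega : 0 < k)
  have hf0 : ∀ i, 1 ≤ i → ∀ u ∈ Wc i, 0 ≤ f i u := fun i hi u hu =>
    (mul_nonneg (by linarith) (deg_nonneg I vtx w hw _ u)).trans (hacc i hi u hu).1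
  have hlt : ∀ i, 1 ≤ i → (Wc i).Nonempty → (Wc (i + 1)).card < (Wc i).card := by
    intro i hi hne
    obtain ⟨u, hu, hle⟩ := exists_le_threshold (Wc i) hne (f i) (hf0 i hi) ξ hξ
    rw [hstep i hi]
    refine Finset.card_lt_card (Finset.filter_ssubset.2 ⟨u, hu, ?_⟩)
    rw [not_not]
    convert hle using 2
    field_simp
  have hempty : ∃ i, 1 ≤ i ∧ Wc i = ∅ := by
    by_contra! h
    -- without an empty term the cardinality would drop at every step
    have hb : ∀ n, (Wc (n + 1)).card + n ≤ V.card := by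
      intro n
      induction n with
      | zero => simp [hW1]
      | succ n ih =>
        have := hlt (n + 1) (by omega) (h (n + 1) (by omega))
        omega
    have := hb (V.card + 1)
    omega
  refine ⟨hempty, fun j hj hjne hmax S hS => ?_⟩
  have hcross : ∃ i, 1 ≤ i ∧ S ⊆ Wc i ∧ ¬ S ⊆ Wc (i + 1) := by
    by_contra! h
    have hall : ∀ i, 1 ≤ i → S ⊆ Wc i := fun i hi =>
      Nat.le_induction (hW1 ▸ hS.1) h i hi
    obtain ⟨i, hi, he⟩ := hempty
    have := hall i hi
    rw [he, Finset.subset_empty] at this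
    exact hS.2.1.ne_empty this
  obtain ⟨i, hi, hSi, hSn⟩ := hcross
  obtain ⟨v, hvS, hvn⟩ := Finset.not_subset.1 hSn
  have hthr : f i v ≤ (k : ℝ) * (1 + ξ) * ((1 / (k : ℝ)) * ∑ x ∈ Wc i, f i x)
      / ((Wc i).card : ℝ) := by
    by_contra hc
    exact hvn (by rw [hstep i hi]; exact Finset.mem_filter.2 ⟨hSi hvS, hc⟩)
  have hest : ((1 / (k : ℝ)) * ∑ x ∈ Wc j, f j x) / ((Wc j).card : ℝ)
      ≤ (1 + ε) * rhoW I vtx w (Wc j) := by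
    have hsum : ∑ x ∈ Wc j, f j x ≤ (1 + ε) * (k * tauW I vtx w (Wc j)) := by
      rw [← sum_deg k I vtx w hcard, Finset.mul_sum]
      exact Finset.sum_le_sum fun u hu => (hacc j hj u hu).2
    unfold rhoW
    rw [← mul_div_assoc]
    refine div_le_div_of_nonneg_right ?_ (Nat.cast_nonneg _)
    rw [one_div, inv_mul_le_iff₀ hk0]
    linarith
  have hkey : (1 - ε) * rhoW I vtx w S ≤ k * (1 + ξ) * ((1 + ε) * rhoW I vtx w (Wc j)) := by
    calc (1 - ε) * rhoW I vtx w S ≤ (1 - ε) * degW I vtx w (Wc i) v :=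
          mul_le_mul_of_nonneg_left ((rho_le_deg_of_optimal k hk V I vtx w hcard S hS v hvS).trans
            (deg_mono I vtx w hw hSi v)) (by linarith)
      _ ≤ f i v := (hacc i hi v (hSi hvS)).1
      _ ≤ _ := hthr
      _ = k * (1 + ξ) * (((1 / (k : ℝ)) * ∑ x ∈ Wc i, f i x) / ((Wc i).card : ℝ)) := by ring
      _ ≤ _ := mul_le_mul_of_nonneg_left ((hmax i hi ⟨v, hSi hvS⟩).trans hest) (by positivity)
  have hρ := rho_nonneg I vtx w hw (Wc j)
  rw [div_mul_eq_mul_div, div_le_iff₀ (by positivity)]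
  calc (1 - ε) ^ 2 * rhoW I vtx w S = (1 - ε) * ((1 - ε) * rhoW I vtx w S) := by ring
    _ ≤ (1 - ε) * (k * (1 + ξ) * ((1 + ε) * rhoW I vtx w (Wc j))) :=
        mul_le_mul_of_nonneg_left hkey (by linarith)
    _ ≤ (1 + ε) * (k * (1 + ξ) * ((1 + ε) * rhoW I vtx w (Wc j))) :=
        mul_le_mul_of_nonneg_right (by linarith) (by positivity)
    _ = _ := by ring
end
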